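/- Let ν be a Borel probability measure on [0,∞) with finite first moment, and let (A_l^ν)_{l≥0} be the recursively defined barycenter sets. Then the closure in [0,∞) of the union ∪_{l≥0} (A_l^ν ∩ [0,∞)) contains the support of ν. -/

import Mathlib

open MeasureTheory Set Filter

/-- Barycenter of `ν` over the interval `[a, b) ⊂ [0,∞]` (endpoints in `EReal`),
with the convention that it equals the left endpoint `a` when the interval is null. -/
noncomputable def ebary (ν : Measure ℝ) (a b : EReal) : EReal :=
  if ν {x : ℝ | a ≤ (x : EReal) ∧ (x : EReal) < b} = 0 then a
  else (((∫ r in {x : ℝ | a ≤ (x : EReal) ∧ (x : EReal) < b}, r ∂ν) /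
      (ν {x : ℝ | a ≤ (x : EReal) ∧ (x : EReal) < b}).toReal : ℝ) : EReal)

/-- The sorted points `0 = a₁ ≤ a₂ ≤ ⋯ ≤ a_{2^l+1} = +∞` of the recursively defined
set `A_l^ν`: `pts ν l i` is `a_{i+1}` for `i = 0, …, 2^l`.  At each stage the barycenter
of each interval `[aᵢ, aᵢ₊₁)` is inserted between its endpoints. -/
noncomputable def pts (ν : Measure ℝ) : ℕ → ℕ → EReal
  | 0, 0 => 0
  | 0, _ + 1 => ⊤
  | l + 1, i =>
      if i % 2 = 0 then pts ν l (i / 2)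
      else ebary ν (pts ν l (i / 2)) (pts ν l (i / 2 + 1))

/-- The union `⋃_{l ≥ 0} (A_l^ν ∩ [0,∞))` of the finite parts of the recursively
defined barycenter sets, as a subset of `ℝ`. -/
def barycenterPoints (ν : Measure ℝ) : Set ℝ :=
  {x : ℝ | ∃ l i : ℕ, i ≤ 2 ^ l ∧ pts ν l i = (x : EReal)}

/-!
If an interval `(p, q)` of positive mass contained no barycenter, then at every stage some pair of
consecutive points `a ≤ p`, `q ≤ b` would enclose it. The mass on `(p, q)` pulls the barycenter of
`[a, b)` away from both endpoints by a distance `c > 0` that does not depend on `a` and `b`. Take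
`a` within `c` of the supremum of all left endpoints: the barycenter is too far to the right to be
a left endpoint, so it is a right endpoint, and the same `a` is kept from then on. Hence the right
endpoint paired with `a` can be lowered by `c` indefinitely, although it stays above `q`.
-/

section Average

variable {α : Type*} [MeasurableSpace α] {μ : Measure α} {s t : Set α} {f : α → ℝ} {a b p q : ℝ}

theorem setIntegral_pos_of_forall_pos (hs : MeasurableSet s) (hμs : μ s ≠ 0)
    (hf : IntegrableOn f s μ) (hpos : ∀ x ∈ s, 0 < f x) : 0 < ∫ x in s, f x ∂μ := by
  have hnonneg : 0 ≤ᵐ[μ.restrict s] f := ae_restrict_of_forall_mem hs fun x hx => (hpos x hx).le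
  have hsub : s ⊆ Function.support f := fun x hx => (hpos x hx).ne'
  rw [setIntegral_pos_iff_support_of_nonneg_ae hnonneg hf, inter_eq_right.2 hsub]
  exact pos_iff_ne_zero.2 hμs

theorem setAverage_sub_const (hμs₀ : μ s ≠ 0) (hμs : μ s ≠ ⊤) (hf : IntegrableOn f s μ) (c : ℝ) :
    ⨍ x in s, (f x - c) ∂μ = ⨍ x in s, f x ∂μ - c := by
  rw [setAverage_eq, integral_sub hf (integrableOn_const hμs), smul_sub, ← setAverage_eq,
    ← setAverage_eq, setAverage_const hμs₀ hμs]

variable [IsFiniteMeasure μ]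

theorem setIntegral_div_measureReal_univ_le_setAverage (hs : MeasurableSet s) (hts : t ⊆ s)
    (hf : IntegrableOn f s μ) (hnonneg : ∀ x ∈ s, 0 ≤ f x) :
    (∫ x in t, f x ∂μ) / μ.real univ ≤ ⨍ x in s, f x ∂μ := by
  have havg : 0 ≤ ⨍ x in s, f x ∂μ := by
    rw [setAverage_eq]
    exact smul_nonneg (inv_nonneg.2 measureReal_nonneg) (setIntegral_nonneg hs hnonneg)
  refine div_le_of_le_mul₀ measureReal_nonneg havg ?_
  calc ∫ x in t, f x ∂μ
    _ ≤ ∫ x in s, f x ∂μ :=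
      setIntegral_mono_set hf (ae_restrict_of_forall_mem hs hnonneg) hts.eventuallyLE
    _ = (⨍ x in s, f x ∂μ) * μ.real s := by
      rw [← measure_smul_setAverage f (measure_ne_top μ s), smul_eq_mul, mul_comm]
    _ ≤ (⨍ x in s, f x ∂μ) * μ.real univ := by gcongr; exacts [measure_ne_top μ univ, subset_univ s]

theorem add_setIntegral_sub_div_le_setAverage (hs : MeasurableSet s) (hμs : μ s ≠ 0) (hts : t ⊆ s)
    (hf : IntegrableOn f s μ) (haf : ∀ x ∈ s, a ≤ f x) (hap : a ≤ p) :
    a + (∫ x in t, (f x - p) ∂μ) / μ.real univ ≤ ⨍ x in s, f x ∂μ := by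
  have hint : ∀ c : ℝ, IntegrableOn (fun x => f x - c) s μ := fun c => hf.sub integrableOn_const
  have hmono : ∫ x in t, (f x - p) ∂μ ≤ ∫ x in t, (f x - a) ∂μ :=
    setIntegral_mono ((hint p).mono_set hts) ((hint a).mono_set hts) fun x => by gcongr
  have havg : (∫ x in t, (f x - p) ∂μ) / μ.real univ ≤ ⨍ x in s, (f x - a) ∂μ :=
    (div_le_div_of_nonneg_right hmono measureReal_nonneg).trans <|
      setIntegral_div_measureReal_univ_le_setAverage hs hts (hint a)
        fun x hx => sub_nonneg.2 (haf x hx)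
  rw [setAverage_sub_const hμs (measure_ne_top μ s) hf] at havg
  exact add_le_of_le_sub_left havg

theorem setAverage_add_setIntegral_sub_div_le (hs : MeasurableSet s) (hμs : μ s ≠ 0) (hts : t ⊆ s)
    (hf : IntegrableOn f s μ) (hfb : ∀ x ∈ s, f x ≤ b) (hqb : q ≤ b) :
    ⨍ x in s, f x ∂μ + (∫ x in t, (q - f x) ∂μ) / μ.real univ ≤ b := by
  have h := add_setIntegral_sub_div_le_setAverage hs hμs hts hf.neg
    (fun x hx => neg_le_neg (hfb x hx)) (neg_le_neg hqb)
  simp only [Pi.neg_apply, average_neg, neg_sub_neg] at h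
  linarith

end Average

section Barycenter

variable {ν : Measure ℝ} {a b : EReal}

theorem ebary_eq_setAverage (h : ν (Real.toEReal ⁻¹' Ico a b) ≠ 0) :
    ebary ν a b = (⨍ r in Real.toEReal ⁻¹' Ico a b, r ∂ν : ℝ) := by
  rw [setAverage_eq, smul_eq_mul, inv_mul_eq_div]
  exact if_neg h

theorem exists_ebary_eq_coe_and_setIntegral_bounds [IsFiniteMeasure ν] {t : Set ℝ} {a p q : ℝ}
    (hmom : IntegrableOn (fun r : ℝ => r) (Real.toEReal ⁻¹' Ico a b) ν)
    (ht : t ⊆ Real.toEReal ⁻¹' Ico a b) (hνt : ν t ≠ 0) (hap : a ≤ p) (hqb : q ≤ b) :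
    ∃ m : ℝ, ebary ν a b = m ∧ a + (∫ r in t, (r - p) ∂ν) / ν.real univ ≤ m ∧
      (m + (∫ r in t, (q - r) ∂ν) / ν.real univ : ℝ) ≤ b := by
  have hs : MeasurableSet (Real.toEReal ⁻¹' Ico (a : EReal) b) :=
    measurable_coe_real_ereal measurableSet_Ico
  have hνs : ν (Real.toEReal ⁻¹' Ico a b) ≠ 0 := fun h => hνt (measure_mono_null ht h)
  refine ⟨⨍ r in Real.toEReal ⁻¹' Ico a b, r ∂ν, ebary_eq_setAverage hνs,
    add_setIntegral_sub_div_le_setAverage hs hνs ht hmom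
      (fun r hr => EReal.coe_le_coe_iff.1 hr.1) hap, ?_⟩
  induction b with
  | bot => exact absurd hqb (EReal.bot_lt_coe q).not_ge
  | top => exact le_top
  | coe b =>
    exact EReal.coe_le_coe <| setAverage_add_setIntegral_sub_div_le hs hνs ht hmom
      (fun r hr => (EReal.coe_lt_coe_iff.1 hr.2).le) (EReal.coe_le_coe_iff.1 hqb)

theorem exists_pos_forall_ebary_eq_coe_and_add_le [IsFiniteMeasure ν]
    (hmom : IntegrableOn (fun r : ℝ => r) (Ici 0) ν) {p q : ℝ} (hpq : ν (Ioo p q) ≠ 0) :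
    ∃ c > 0, ∀ (a : ℝ) (b : EReal), 0 ≤ a → a ≤ p → q ≤ b →
      ∃ m : ℝ, ebary ν a b = m ∧ a + c ≤ m ∧ (m + c : ℝ) ≤ b := by
  set u : ℝ := (∫ r in Ioo p q, (r - p) ∂ν) / ν.real univ
  set v : ℝ := (∫ r in Ioo p q, (q - r) ∂ν) / ν.real univ
  have hν : 0 < ν.real univ :=
    ENNReal.toReal_pos (fun h => hpq (measure_mono_null (subset_univ _) h)) (measure_ne_top ν univ)
  have hpos : ∀ f : ℝ → ℝ, Continuous f → (∀ r ∈ Ioo p q, 0 < f r) →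
      0 < (∫ r in Ioo p q, f r ∂ν) / ν.real univ := fun f hf hf_pos =>
    div_pos (setIntegral_pos_of_forall_pos measurableSet_Ioo hpq
      (hf.integrableOn_Icc.mono_set Ioo_subset_Icc_self) hf_pos) hν
  have hu : 0 < u := hpos _ (by fun_prop) fun r hr => sub_pos.2 hr.1
  have hv : 0 < v := hpos _ (by fun_prop) fun r hr => sub_pos.2 hr.2
  refine ⟨min u v, lt_min hu hv, fun a b ha hap hqb => ?_⟩
  have hsub : Ioo p q ⊆ Real.toEReal ⁻¹' Ico a b := fun r hr =>
    ⟨EReal.coe_le_coe (hap.trans hr.1.le), (EReal.coe_lt_coe hr.2).trans_le hqb⟩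
  have hint : IntegrableOn (fun r : ℝ => r) (Real.toEReal ⁻¹' Ico a b) ν :=
    hmom.mono_set fun r hr => ha.trans (EReal.coe_le_coe_iff.1 hr.1)
  obtain ⟨m, hm, ham, hmb⟩ := exists_ebary_eq_coe_and_setIntegral_bounds hint hsub hpq hap hqb
  exact ⟨m, hm, (add_le_add_right (min_le_left u v) a).trans ham,
    (EReal.coe_le_coe (add_le_add_right (min_le_right u v) m)).trans hmb⟩

/-- `a` and `b` are consecutive points of some `A_l^ν`, so that the barycenter of `[a, b)` is
inserted between them at the next stage. Consecutive means adjacent in the indexing by `pts`;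
`a = b` is possible. -/
def ConsecutivePts (ν : Measure ℝ) (a b : EReal) : Prop :=
  ∃ l i : ℕ, i < 2 ^ l ∧ pts ν l i = a ∧ pts ν l (i + 1) = b

namespace ConsecutivePts

theorem zero_top (ν : Measure ℝ) : ConsecutivePts ν 0 ⊤ :=
  ⟨0, 0, by simp, by simp [pts], by simp [pts]⟩

theorem left_ebary (h : ConsecutivePts ν a b) : ConsecutivePts ν a (ebary ν a b) := by
  obtain ⟨l, i, hi, rfl, rfl⟩ := h
  have hdiv : (2 * i + 1) / 2 = i := by lia
  exact ⟨l + 1, 2 * i, by lia, by simp [pts], by simp [pts, hdiv]⟩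

theorem ebary_right (h : ConsecutivePts ν a b) : ConsecutivePts ν (ebary ν a b) b := by
  obtain ⟨l, i, hi, rfl, rfl⟩ := h
  have hdiv : (2 * i + 1) / 2 = i := by lia
  have hsucc : 2 * i + 1 + 1 = 2 * (i + 1) := by ring
  exact ⟨l + 1, 2 * i + 1, by lia, by simp [pts, hdiv], by simp [pts, hsucc]⟩

theorem left_mem_barycenterPoints {x : ℝ} (h : ConsecutivePts ν x b) :
    x ∈ barycenterPoints ν := by
  obtain ⟨l, i, hi, hx, -⟩ := h
  exact ⟨l, i, hi.le, hx⟩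

end ConsecutivePts

theorem zero_mem_barycenterPoints (ν : Measure ℝ) : 0 ∈ barycenterPoints ν :=
  (ConsecutivePts.zero_top ν).left_mem_barycenterPoints

theorem measure_Ioo_eq_zero_of_disjoint_barycenterPoints [IsFiniteMeasure ν]
    (hmom : IntegrableOn (fun r : ℝ => r) (Ici 0) ν) {p q : ℝ} (hp : 0 ≤ p)
    (hdisj : Disjoint (Ioo p q) (barycenterPoints ν)) : ν (Ioo p q) = 0 := by
  by_contra hpq
  obtain ⟨c, hc, hbary⟩ := exists_pos_forall_ebary_eq_coe_and_add_le hmom hpq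
  let L : Set ℝ := {a | a ∈ Icc 0 p ∧ ∃ b : EReal, q ≤ b ∧ ConsecutivePts ν a b}
  have hL : L.Nonempty := ⟨0, left_mem_Icc.2 hp, ⊤, le_top, ConsecutivePts.zero_top ν⟩
  have hL_bdd : BddAbove L := ⟨p, fun a ha => ha.1.2⟩
  obtain ⟨a, ⟨⟨ha₀, hap⟩, b₀, hqb₀, hab₀⟩, ha_sup⟩ :=
    exists_lt_of_lt_csSup hL (sub_lt_self (sSup L) hc)
  let R : Set ℝ := {b | q ≤ b ∧ ConsecutivePts ν a b}
  have hR_step : ∀ b : EReal, q ≤ b → ConsecutivePts ν a b → ∃ m ∈ R, (m + c : ℝ) ≤ b := by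
    intro b hqb hab
    obtain ⟨m, hm, ham, hmb⟩ := hbary a b ha₀ hap hqb
    have hleft : ConsecutivePts ν a m := hm ▸ hab.left_ebary
    have hright : ConsecutivePts ν m b := hm ▸ hab.ebary_right
    have hpm : p < m := by
      by_contra! hmp
      have hmL : m ∈ L := ⟨⟨by linarith, hmp⟩, b, hqb, hright⟩
      linarith [le_csSup hL_bdd hmL]
    have hqm : q ≤ m := by
      by_contra! hmq
      exact disjoint_left.1 hdisj ⟨hpm, hmq⟩ hright.left_mem_barycenterPoints
    exact ⟨m, ⟨hqm, hleft⟩, hmb⟩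
  have hR : R.Nonempty := (hR_step b₀ hqb₀ hab₀).imp fun m hm => hm.1
  have hR_bdd : BddBelow R := ⟨q, fun b hb => hb.1⟩
  obtain ⟨b, ⟨hqb, hab⟩, hb_inf⟩ := exists_lt_of_csInf_lt hR (lt_add_of_pos_right (sInf R) hc)
  obtain ⟨m, hmR, hmb⟩ := hR_step b (EReal.coe_le_coe hqb) hab
  linarith [csInf_le hR_bdd hmR, EReal.coe_le_coe_iff.1 hmb]

end Barycenter

theorem support_subset_closure_barycenterPoints_general (ν : Measure ℝ) [IsFiniteMeasure ν]
    (hmom : IntegrableOn (fun r : ℝ => r) (Ici 0) ν) :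
    ν.support ∩ Ici 0 ⊆ closure (barycenterPoints ν) := by
  rintro x ⟨hx, hx₀⟩
  by_contra hcl
  obtain ⟨p, q, hxpq, hsub⟩ :=
    mem_nhds_iff_exists_Ioo_subset.1 (isClosed_closure.compl_mem_nhds hcl)
  have hdisj : Disjoint (Ioo p q) (barycenterPoints ν) :=
    (subset_compl_iff_disjoint_right.1 hsub).mono_right subset_closure
  have hp : 0 ≤ p := by
    by_contra! hp
    exact disjoint_left.1 hdisj ⟨hp, hx₀.trans_lt hxpq.2⟩ (zero_mem_barycenterPoints ν)
  have hpos : 0 < ν (Ioo p q) :=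
    (Measure.mem_support_iff_forall x).1 hx _ (Ioo_mem_nhds hxpq.1 hxpq.2)
  exact hpos.ne' (measure_Ioo_eq_zero_of_disjoint_barycenterPoints hmom hp hdisj)

/-- The closure of `⋃_l (A_l^ν ∩ [0,∞))` contains the support of `ν`:
every point all of whose open neighbourhoods have positive `ν`-measure lies in the
closure of the barycenter points. -/
theorem support_subset_closure_barycenterPoints (ν : Measure ℝ) [IsProbabilityMeasure ν]
    (hsupp : ν (Set.Iio 0) = 0)
    (hmom : Integrable (fun r : ℝ => r) ν) :
    {x : ℝ | ∀ U : Set ℝ, IsOpen U → x ∈ U → 0 < ν U} ⊆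
      closure (barycenterPoints ν) :=
  fun x hx => support_subset_closure_barycenterPoints_general ν hmom.integrableOn
    ⟨((nhds_basis_opens x).mem_measureSupport).2 fun U hU => hx U hU.2 hU.1,
      mem_Ici.2 <| not_lt.1 fun hx₀ => (hx _ isOpen_Iio hx₀).ne' hsupp⟩
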